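/- For every smooth character χ of T, the extension group Ext^1 of the one-dimensional module ℂ_χ by 𝕊 in the category of smooth TS-modules is one-dimensional, spanned by the class of 𝔼[χ]: every short exact sequence 0 → 𝕊 → M → ℂ_χ → 0 of TS-modules either splits or has middle term M isomorphic to 𝔼[χ], and the sequence 0 → 𝕊 → 𝔼[χ] → ℂ_χ → 0 does not split. -/

import Mathlib

noncomputable section

open scoped Classical

namespace PSW

/-! ### The affine group `λ.b : x ↦ λ·x + b` over a field `K`. -/

@[ext]
structure Aff (K : Type*) [Field K] where
  t : Kˣ
  s : K

namespace Aff

variable {K : Type*} [Field K]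

instance : Mul (Aff K) := ⟨fun g h => ⟨g.t * h.t, g.s + (g.t : K) * h.s⟩⟩
instance : One (Aff K) := ⟨⟨1, 0⟩⟩
instance : Inv (Aff K) := ⟨fun g => ⟨g.t⁻¹, -(((g.t⁻¹ : Kˣ) : K) * g.s)⟩⟩

@[simp] lemma mul_t (g h : Aff K) : (g * h).t = g.t * h.t := rfl
@[simp] lemma mul_s (g h : Aff K) : (g * h).s = g.s + (g.t : K) * h.s := rfl
@[simp] lemma one_t : (1 : Aff K).t = 1 := rfl
@[simp] lemma one_s : (1 : Aff K).s = 0 := rfl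
@[simp] lemma inv_t (g : Aff K) : (g⁻¹).t = g.t⁻¹ := rfl
@[simp] lemma inv_s (g : Aff K) : (g⁻¹).s = -(((g.t⁻¹ : Kˣ) : K) * g.s) := rfl

instance : Group (Aff K) where
  mul_assoc a b c := by
    ext
    · simp [mul_assoc]
    · simp only [mul_s, mul_t, Units.val_mul]; ring
  one_mul a := by ext <;> simp
  mul_one a := by ext <;> simp
  inv_mul_cancel a := by
    ext
    · simp
    · simp

/-- The element `x_λ` of the group `TS`. -/
def xT (u : Kˣ) : Aff K := ⟨u, 0⟩

/-- The element `s_b` of the group `TS`. -/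
def sS (b : K) : Aff K := ⟨1, b⟩

@[simp] lemma xT_t (u : Kˣ) : (xT u : Aff K).t = u := rfl
@[simp] lemma xT_s (u : Kˣ) : (xT u : Aff K).s = 0 := rfl
@[simp] lemma sS_t (b : K) : (sS b : Aff K).t = 1 := rfl
@[simp] lemma sS_s (b : K) : (sS b : Aff K).s = b := rfl

/-- `T ≅ k^×` as a subgroup of `TS`. -/
def xTHom : Kˣ →* Aff K where
  toFun := xT
  map_one' := rfl
  map_mul' u v := by ext <;> simp [xT]

@[simp] lemma xTHom_apply (u : Kˣ) : (xTHom u : Aff K) = xT u := rfl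

lemma mul_sS (g : Aff K) (b : K) : g * sS b = sS ((g.t : K) * b) * g := by
  ext
  · simp
  · simp [add_comm]

lemma sS_mul (b : K) (g : Aff K) : sS b * g = g * sS (((g.t⁻¹ : Kˣ) : K) * b) := by
  ext
  · simp
  · simp [Units.mul_inv_cancel_left, add_comm]

lemma aff_decomp (g : Aff K) : g = xT g.t * sS (((g.t⁻¹ : Kˣ) : K) * g.s) := by
  ext
  · simp
  · simp [Units.mul_inv_cancel_left]

instance [TopologicalSpace K] : TopologicalSpace (Aff K) :=
  TopologicalSpace.induced (fun g : Aff K => ((g.t, g.s) : Kˣ × K)) inferInstance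

end Aff

/-! ### Generalities on representations of a monoid on complex vector spaces. -/

namespace GRep

variable {G : Type*} [Monoid G]

section MonoidModules

variable {V W : Type*} [AddCommMonoid V] [Module ℂ V] [AddCommMonoid W] [Module ℂ W]

/-- A submodule invariant under the representation. -/
def Invariant (ρ : Representation ℂ G V) (U : Submodule ℂ V) : Prop :=
  ∀ (g : G) (v : V), v ∈ U → ρ g v ∈ U

/-- Equivariance of a linear map with respect to two representations. -/
def Equivariant (ρ : Representation ℂ G V) (σ : Representation ℂ G W) (f : V →ₗ[ℂ] W) : Prop :=
  ∀ (g : G) (v : V), f (ρ g v) = σ g (f v)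

/-- Isomorphism of representations. -/
def Iso (ρ : Representation ℂ G V) (σ : Representation ℂ G W) : Prop :=
  ∃ e : V ≃ₗ[ℂ] W, ∀ (g : G) (v : V), e (ρ g v) = σ g (e v)

/-- Irreducibility. -/
def Irred (ρ : Representation ℂ G V) : Prop :=
  Nontrivial V ∧ ∀ U : Submodule ℂ V, Invariant ρ U → U = ⊥ ∨ U = ⊤

/-- Subrepresentation on an invariant submodule. -/
def sub (ρ : Representation ℂ G V) {U : Submodule ℂ V} (hU : Invariant ρ U) :
    Representation ℂ G ↥U where
  toFun g := (ρ g).restrict fun v hv => hU g v hv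
  map_one' := by
    apply LinearMap.ext; intro v; apply Subtype.ext
    simp [LinearMap.restrict_apply]
  map_mul' g h := by
    apply LinearMap.ext; intro v; apply Subtype.ext
    simp [LinearMap.restrict_apply]

@[simp] lemma sub_apply (ρ : Representation ℂ G V) {U : Submodule ℂ V} (hU : Invariant ρ U)
    (g : G) (v : ↥U) : ((sub ρ hU g v : ↥U) : V) = ρ g (v : V) := rfl

lemma ker_invariant (ρ : Representation ℂ G V) (σ : Representation ℂ G W)
    (f : V →ₗ[ℂ] W) (hf : Equivariant ρ σ f) : Invariant ρ (LinearMap.ker f) := by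
  intro g v hv
  rw [LinearMap.mem_ker] at hv ⊢
  rw [hf g v, hv, map_zero]

lemma range_invariant (ρ : Representation ℂ G V) (σ : Representation ℂ G W)
    (f : V →ₗ[ℂ] W) (hf : Equivariant ρ σ f) : Invariant σ (LinearMap.range f) := by
  rintro g w ⟨v, rfl⟩
  exact ⟨ρ g v, hf g v⟩

lemma map_invariant (ρ : Representation ℂ G V) (σ : Representation ℂ G W)
    (f : V →ₗ[ℂ] W) (hf : Equivariant ρ σ f) (U : Submodule ℂ V) (hU : Invariant ρ U) :
    Invariant σ (U.map f) := by
  rintro g w ⟨v, hv, rfl⟩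
  exact ⟨ρ g v, hU g v hv, hf g v⟩

end MonoidModules

section GroupModules

variable {V W : Type*} [AddCommGroup V] [Module ℂ V] [AddCommGroup W] [Module ℂ W]

/-- Quotient representation. -/
def quot (ρ : Representation ℂ G V) (U : Submodule ℂ V) (hU : Invariant ρ U) :
    Representation ℂ G (V ⧸ U) where
  toFun g := U.mapQ U (ρ g) fun v hv => hU g v hv
  map_one' := by
    apply LinearMap.ext; intro x
    obtain ⟨v, rfl⟩ := Submodule.Quotient.mk_surjective U x
    simp [Submodule.mapQ_apply]
  map_mul' g h := by
    apply LinearMap.ext; intro x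
    obtain ⟨v, rfl⟩ := Submodule.Quotient.mk_surjective U x
    simp [Submodule.mapQ_apply]

@[simp] lemma quot_apply (ρ : Representation ℂ G V) (U : Submodule ℂ V) (hU : Invariant ρ U)
    (g : G) (v : V) :
    quot ρ U hU g (Submodule.Quotient.mk v) = Submodule.Quotient.mk (ρ g v) := rfl

/-- Subquotient representation on `B/A`. -/
def subquot (ρ : Representation ℂ G V) {A B : Submodule ℂ V}
    (hA : Invariant ρ A) (hB : Invariant ρ B) :
    Representation ℂ G (↥B ⧸ A.comap B.subtype) :=
  quot (sub ρ hB) (A.comap B.subtype) fun g v hv => hA g v.1 hv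

lemma mkQ_equivariant (ρ : Representation ℂ G V) (U : Submodule ℂ V) (hU : Invariant ρ U) :
    Equivariant ρ (quot ρ U hU) U.mkQ := by
  intro g v
  show Submodule.Quotient.mk (ρ g v) = quot ρ U hU g (Submodule.Quotient.mk v)
  rw [quot_apply]

end GroupModules

end GRep

/-! ### TS-modules: representations of the affine group. -/

/-- A `TS`-module structure on `V` is a representation of the group `TS ≅ Gl_a(1)`. -/
abbrev Rep (K : Type*) [Field K] (V : Type*) [AddCommGroup V] [Module ℂ V] :=
  Representation ℂ (Aff K) V

section RepDefs

open Aff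

variable {K : Type*} [Field K]
variable {V W : Type*} [AddCommGroup V] [Module ℂ V] [AddCommGroup W] [Module ℂ W]

/-- Smoothness: every vector has open stabilizer. -/
def IsSmoothRep [TopologicalSpace K] (ρ : Rep K V) : Prop :=
  ∀ v : V, IsOpen {g : Aff K | ρ g v = v}

/-- Smoothness of a `T`-module, i.e. of a representation of `T ≅ k^×`. -/
def TIsSmooth {X : Type*} [AddCommMonoid X] [Module ℂ X] [TopologicalSpace K]
    (τ : Representation ℂ Kˣ X) : Prop :=
  ∀ x : X, IsOpen {u : Kˣ | τ u x = x}

/-- Smooth character of `T ≅ k^×` (open kernel, equivalently locally constant). -/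
def SmoothMulChar [TopologicalSpace K] (χ : Kˣ →* ℂˣ) : Prop :=
  IsOpen {u : Kˣ | χ u = 1}

/-- The space `V^S` of `S`-invariants. -/
def sInv (ρ : Rep K V) : Submodule ℂ V where
  carrier := {v | ∀ b : K, ρ (sS b) v = v}
  zero_mem' := fun b => map_zero _
  add_mem' {a b} ha hb := fun c => by rw [map_add, ha c, hb c]
  smul_mem' c v hv := fun b => by rw [map_smul, hv b]

@[simp] lemma mem_sInv (ρ : Rep K V) (v : V) :
    v ∈ sInv ρ ↔ ∀ b : K, ρ (sS b) v = v := Iff.rfl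

/-- The `χ`-eigenspace `X^{T,χ}` of a `T`-module. -/
def tEigenT {X : Type*} [AddCommMonoid X] [Module ℂ X]
    (τ : Representation ℂ Kˣ X) (χ : Kˣ →* ℂˣ) : Submodule ℂ X where
  carrier := {x | ∀ u : Kˣ, τ u x = (χ u : ℂ) • x}
  zero_mem' := fun u => by simp
  add_mem' {a b} ha hb := fun u => by rw [map_add, ha u, hb u, smul_add]
  smul_mem' c x hx := fun u => by rw [map_smul, hx u]; exact smul_comm c ((χ u : ℂ)) x

@[simp] lemma mem_tEigenT {X : Type*} [AddCommMonoid X] [Module ℂ X]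
    (τ : Representation ℂ Kˣ X) (χ : Kˣ →* ℂˣ) (x : X) :
    x ∈ tEigenT τ χ ↔ ∀ u : Kˣ, τ u x = (χ u : ℂ) • x := Iff.rfl

/-- The `χ`-eigenspace `V^{T,χ}` of a `TS`-module. -/
def tEigen (ρ : Rep K V) (χ : Kˣ →* ℂˣ) : Submodule ℂ V := tEigenT (ρ.comp xTHom) χ

/-- The kernel of the projection to the `S`-coinvariants `V_S`. -/
def sCoinvKer (ρ : Rep K V) : Submodule ℂ V :=
  Submodule.span ℂ {w : V | ∃ (b : K) (v : V), w = ρ (sS b) v - v}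

/-- The kernel of the projection to the twisted coinvariants `V_{S,ψ'}`. -/
def sTwistKer (ρ : Rep K V) (ψ' : AddChar K ℂ) : Submodule ℂ V :=
  Submodule.span ℂ {w : V | ∃ (b : K) (v : V), w = ρ (sS b) v - ψ' b • v}

/-- The kernel of the projection to the `χ`-coinvariants `X_{T,χ}` of a `T`-module. -/
def tTwistKerT {X : Type*} [AddCommGroup X] [Module ℂ X]
    (τ : Representation ℂ Kˣ X) (χ : Kˣ →* ℂˣ) : Submodule ℂ X :=
  Submodule.span ℂ {w : X | ∃ (u : Kˣ) (x : X), w = τ u x - (χ u : ℂ) • x}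

/-- The kernel of the projection to the `χ`-coinvariants `V_{T,χ}` of a `TS`-module. -/
def tTwistKer (ρ : Rep K V) (χ : Kˣ →* ℂˣ) : Submodule ℂ V := tTwistKerT (ρ.comp xTHom) χ

lemma sCoinvKer_invariant (ρ : Rep K V) : GRep.Invariant ρ (sCoinvKer ρ) := by
  intro g v hv
  have h : sCoinvKer ρ ≤ Submodule.comap (ρ g) (sCoinvKer ρ) := by
    refine Submodule.span_le.2 ?_
    rintro w ⟨b, v', rfl⟩
    simp only [SetLike.mem_coe, Submodule.mem_comap, map_sub]
    have h1 : ρ g (ρ (sS b) v') = ρ (sS ((g.t : K) * b)) (ρ g v') := by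
      rw [← Module.End.mul_apply, ← map_mul, mul_sS, map_mul, Module.End.mul_apply]
    rw [h1]
    exact Submodule.subset_span ⟨(g.t : K) * b, ρ g v', rfl⟩
  exact h hv

lemma sInv_invariant (ρ : Rep K V) : GRep.Invariant ρ (sInv ρ) := by
  intro g v hv
  rw [mem_sInv] at hv ⊢
  intro b
  have h1 : ρ (sS b) (ρ g v) = ρ g (ρ (sS (((g.t⁻¹ : Kˣ) : K) * b)) v) := by
    rw [← Module.End.mul_apply, ← map_mul, sS_mul, map_mul, Module.End.mul_apply]
  rw [h1, hv _]

/-- The `S`-coinvariants `π₀(V) = V_S` as a `TS`-module (`S` acting trivially). -/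
def piZeroRep (ρ : Rep K V) : Rep K (V ⧸ sCoinvKer ρ) :=
  GRep.quot ρ (sCoinvKer ρ) (sCoinvKer_invariant ρ)

/-- The `S`-coinvariants `π₀(V) = V_S` as a `T`-module. -/
def piZeroT (ρ : Rep K V) : Representation ℂ Kˣ (V ⧸ sCoinvKer ρ) :=
  (piZeroRep ρ).comp xTHom

/-- The `T`-module structure on `κ(V) = V^S`. -/
def sInvT (ρ : Rep K V) : Representation ℂ Kˣ ↥(sInv ρ) :=
  (GRep.sub ρ (sInv_invariant ρ)).comp xTHom

/-- A `TS`-module is perfect if all its eigenspaces `V^{T,χ}` for smooth `χ` vanish. -/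
def Perfect [TopologicalSpace K] (ρ : Rep K V) : Prop :=
  ∀ χ : Kˣ →* ℂˣ, SmoothMulChar χ → tEigen ρ χ = ⊥

/-- A finite-dimensional `T`-module is cyclic if each generalized eigenspace is a single
Jordan block; equivalently all eigenspaces `X^{T,χ}` have dimension at most one. -/
def TCyclic {X : Type*} [AddCommGroup X] [Module ℂ X]
    (τ : Representation ℂ Kˣ X) : Prop :=
  ∀ χ : Kˣ →* ℂˣ, Module.finrank ℂ ↥(tEigenT τ χ) ≤ 1

lemma sCoinvKer_le_comap (ρ : Rep K V) (σ : Rep K W)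
    (f : V →ₗ[ℂ] W) (hf : GRep.Equivariant ρ σ f) :
    sCoinvKer ρ ≤ (sCoinvKer σ).comap f := by
  refine Submodule.span_le.2 ?_
  rintro w ⟨b, v, rfl⟩
  simp only [SetLike.mem_coe, Submodule.mem_comap, map_sub]
  rw [hf]
  exact Submodule.subset_span ⟨b, f v, rfl⟩

/-- The map induced by an equivariant map on the `S`-coinvariants `π₀`. -/
def piZeroMap (ρ : Rep K V) (σ : Rep K W) (f : V →ₗ[ℂ] W) (hf : GRep.Equivariant ρ σ f) :
    (V ⧸ sCoinvKer ρ) →ₗ[ℂ] (W ⧸ sCoinvKer σ) :=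
  Submodule.mapQ _ _ f (sCoinvKer_le_comap ρ σ f hf)

lemma piZeroMap_equivariant (ρ : Rep K V) (σ : Rep K W) (f : V →ₗ[ℂ] W)
    (hf : GRep.Equivariant ρ σ f) :
    GRep.Equivariant (piZeroRep ρ) (piZeroRep σ) (piZeroMap ρ σ f hf) := by
  intro g x
  obtain ⟨v, rfl⟩ := Submodule.Quotient.mk_surjective _ x
  show piZeroMap ρ σ f hf (piZeroRep ρ g (Submodule.Quotient.mk v))
      = piZeroRep σ g (piZeroMap ρ σ f hf (Submodule.Quotient.mk v))
  rw [show piZeroRep ρ g (Submodule.Quotient.mk v) = Submodule.Quotient.mk (ρ g v) from rfl]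
  rw [show piZeroMap ρ σ f hf (Submodule.Quotient.mk v) = Submodule.Quotient.mk (f v) from rfl]
  rw [show piZeroMap ρ σ f hf (Submodule.Quotient.mk (ρ g v))
      = Submodule.Quotient.mk (f (ρ g v)) from rfl]
  rw [show piZeroRep σ g (Submodule.Quotient.mk (f v)) = Submodule.Quotient.mk (σ g (f v)) from rfl]
  rw [hf]

lemma kappaImg_invariant (ρ : Rep K V) :
    GRep.Invariant (piZeroT ρ) ((sInv ρ).map (sCoinvKer ρ).mkQ) := by
  rintro u w ⟨v, hv, rfl⟩
  refine ⟨ρ (xT u) v, sInv_invariant ρ (xT u) v hv, ?_⟩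
  rfl

end RepDefs

/-! ### Composition series and degree. -/

/-- A composition series for a `TS`-module, witnessing finite length: a maximal chain of
invariant submodules (the subquotients are then irreducible). -/
structure CompSeries {K : Type*} [Field K] {V : Type*} [AddCommGroup V] [Module ℂ V]
    (ρ : Rep K V) where
  n : ℕ
  W : ℕ → Submodule ℂ V
  bot : W 0 = ⊥
  top : W n = ⊤
  inv : ∀ i, GRep.Invariant ρ (W i)
  lt : ∀ i < n, W i < W (i + 1)
  maximal : ∀ i < n, ∀ C : Submodule ℂ V, GRep.Invariant ρ C → W i ≤ C → C ≤ W (i + 1) →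
    C = W i ∨ C = W (i + 1)

/-- The number of Jordan–Hölder constituents of a composition series isomorphic to a given
representation `σ` (applied with `σ = 𝕊`, this is the degree). -/
def CompSeries.deg {K : Type*} [Field K] {V : Type*} [AddCommGroup V] [Module ℂ V]
    {ρ : Rep K V} (c : CompSeries ρ) {W₀ : Type*} [AddCommMonoid W₀] [Module ℂ W₀]
    (σ : Representation ℂ (Aff K) W₀) : ℕ :=
  (Finset.univ.filter fun i : Fin c.n =>
    GRep.Iso (GRep.subquot ρ (c.inv i.1) (c.inv (i.1 + 1))) σ).card

/-! ### Fiber products of a `T`-module with a `TS`-module over a `T`-module. -/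

section Fiber

open Aff

variable {K : Type*} [Field K]
variable {X Y E : Type*} [AddCommGroup X] [Module ℂ X] [AddCommGroup Y] [Module ℂ Y]
  [AddCommGroup E] [Module ℂ E]

/-- The product `TS`-module `X × E` where `S` acts trivially on the `T`-module `X`. -/
def prodRepTE (τ : Representation ℂ Kˣ X) (ρ : Rep K E) : Rep K (X × E) where
  toFun g := (τ g.t).prodMap (ρ g)
  map_one' := by
    apply LinearMap.ext; rintro ⟨x, v⟩
    simp
  map_mul' g h := by
    apply LinearMap.ext; rintro ⟨x, v⟩
    simp [map_mul]

/-- The underlying space of the fiber product `𝔼[f] = X ×_Y E`. -/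
def fiberKer (f : X →ₗ[ℂ] Y) (q : E →ₗ[ℂ] Y) : Submodule ℂ (X × E) :=
  LinearMap.ker (f.comp (LinearMap.fst ℂ X E) - q.comp (LinearMap.snd ℂ X E))

lemma mem_fiberKer (f : X →ₗ[ℂ] Y) (q : E →ₗ[ℂ] Y) (p : X × E) :
    p ∈ fiberKer f q ↔ f p.1 = q p.2 := by
  simp [fiberKer, sub_eq_zero]

lemma fiber_invariant (τX : Representation ℂ Kˣ X) (ρE : Rep K E)
    (τY : Representation ℂ Kˣ Y) (f : X →ₗ[ℂ] Y) (q : E →ₗ[ℂ] Y)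
    (hf : ∀ (u : Kˣ) (x : X), f (τX u x) = τY u (f x))
    (hq : sCoinvKer ρE ≤ LinearMap.ker q)
    (hqT : ∀ (u : Kˣ) (v : E), q (ρE (xT u) v) = τY u (q v)) :
    GRep.Invariant (prodRepTE τX ρE) (fiberKer f q) := by
  intro g p hp
  rw [mem_fiberKer] at hp ⊢
  have hsb : q (ρE (sS (((g.t⁻¹ : Kˣ) : K) * g.s)) p.2) = q p.2 := by
    have h1 : ρE (sS (((g.t⁻¹ : Kˣ) : K) * g.s)) p.2 - p.2 ∈ sCoinvKer ρE :=
      Submodule.subset_span ⟨_, _, rfl⟩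
    have h2 := hq h1
    rw [LinearMap.mem_ker, map_sub, sub_eq_zero] at h2
    exact h2
  have hdecomp : ρE g p.2 = ρE (xT g.t) (ρE (sS (((g.t⁻¹ : Kˣ) : K) * g.s)) p.2) := by
    conv_lhs => rw [aff_decomp g]
    rw [map_mul, Module.End.mul_apply]
  have h1 : ((prodRepTE τX ρE) g p).1 = τX g.t p.1 := rfl
  have h2 : ((prodRepTE τX ρE) g p).2 = ρE g p.2 := rfl
  rw [h1, h2, hf, hp, hdecomp, hqT, hsb]

end Fiber

/-! ### Jordan blocks of finite-dimensional `T`-modules. -/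

section Jordan

variable {K : Type*} [Field K]
variable {X : Type*} [AddCommGroup X] [Module ℂ X]

/-- A Jordan block of a `T`-module: a nonzero indecomposable invariant direct summand. -/
def IsJordanBlock (τ : Representation ℂ Kˣ X) (J : Submodule ℂ X) : Prop :=
  J ≠ ⊥ ∧ GRep.Invariant τ J ∧ (∃ C : Submodule ℂ X, GRep.Invariant τ C ∧ IsCompl J C) ∧
    ∀ A B : Submodule ℂ X, GRep.Invariant τ A → GRep.Invariant τ B → A ≤ J → B ≤ J →
      A ⊓ B = ⊥ → A ⊔ B = J → A = ⊥ ∨ B = ⊥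

end Jordan

/-! ### Invariants and coinvariants for a normal subgroup of an arbitrary group. -/

section Grp

variable {Γ : Type*} [Group Γ]
variable {V W : Type*} [AddCommGroup V] [Module ℂ V] [AddCommGroup W] [Module ℂ W]

/-- Invariants `V^N` under a subgroup `N`. -/
def grpInv (ρ : Representation ℂ Γ V) (N : Subgroup Γ) : Submodule ℂ V where
  carrier := {v | ∀ n ∈ N, ρ n v = v}
  zero_mem' := fun n _ => map_zero _
  add_mem' {a b} ha hb := fun n hn => by rw [map_add, ha n hn, hb n hn]
  smul_mem' c v hv := fun n hn => by rw [map_smul, hv n hn]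

@[simp] lemma mem_grpInv (ρ : Representation ℂ Γ V) (N : Subgroup Γ) (v : V) :
    v ∈ grpInv ρ N ↔ ∀ n ∈ N, ρ n v = v := Iff.rfl

/-- The kernel of the projection to the coinvariants `V_N` under a subgroup `N`. -/
def grpCoinvKer (ρ : Representation ℂ Γ V) (N : Subgroup Γ) : Submodule ℂ V :=
  Submodule.span ℂ {w : V | ∃ n ∈ N, ∃ v : V, w = ρ n v - v}

lemma grpInv_invariant (ρ : Representation ℂ Γ V) (N : Subgroup Γ) [hN : N.Normal] :
    GRep.Invariant ρ (grpInv ρ N) := by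
  intro γ v hv
  rw [mem_grpInv] at hv ⊢
  intro n hn
  have hmem : γ⁻¹ * n * γ ∈ N := by
    have := hN.conj_mem n hn γ⁻¹
    simpa using this
  have key : ρ n (ρ γ v) = ρ γ (ρ (γ⁻¹ * n * γ) v) := by
    rw [← Module.End.mul_apply, ← map_mul, ← Module.End.mul_apply, ← map_mul]
    congr 1
    group
  rw [key, hv _ hmem]

lemma grpCoinvKer_invariant (ρ : Representation ℂ Γ V) (N : Subgroup Γ) [hN : N.Normal] :
    GRep.Invariant ρ (grpCoinvKer ρ N) := by
  intro γ v hv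
  have h : grpCoinvKer ρ N ≤ Submodule.comap (ρ γ) (grpCoinvKer ρ N) := by
    refine Submodule.span_le.2 ?_
    rintro w ⟨n, hn, v', rfl⟩
    simp only [SetLike.mem_coe, Submodule.mem_comap, map_sub]
    have key : ρ γ (ρ n v') = ρ (γ * n * γ⁻¹) (ρ γ v') := by
      rw [← Module.End.mul_apply, ← map_mul, ← Module.End.mul_apply, ← map_mul]
      congr 1
      group
    rw [key]
    exact Submodule.subset_span ⟨γ * n * γ⁻¹, hN.conj_mem n hn γ, ρ γ v', rfl⟩
  exact h hv

/-- The map induced on `N`-invariants by an equivariant map. -/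
def grpInvRestrict (ρ : Representation ℂ Γ V) (σ : Representation ℂ Γ W) (N : Subgroup Γ)
    (f : V →ₗ[ℂ] W) (hf : GRep.Equivariant ρ σ f) : ↥(grpInv ρ N) →ₗ[ℂ] ↥(grpInv σ N) :=
  f.restrict (fun v hv => by
    rw [mem_grpInv] at hv ⊢
    intro n hn
    rw [← hf n v, hv n hn])

lemma grpCoinvKer_le_comap (ρ : Representation ℂ Γ V) (σ : Representation ℂ Γ W) (N : Subgroup Γ)
    (f : V →ₗ[ℂ] W) (hf : GRep.Equivariant ρ σ f) :
    grpCoinvKer ρ N ≤ (grpCoinvKer σ N).comap f := by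
  refine Submodule.span_le.2 ?_
  rintro w ⟨n, hn, v, rfl⟩
  simp only [SetLike.mem_coe, Submodule.mem_comap, map_sub]
  rw [hf]
  exact Submodule.subset_span ⟨n, hn, f v, rfl⟩

/-- The map induced on `N`-coinvariants by an equivariant map. -/
def grpCoinvMap (ρ : Representation ℂ Γ V) (σ : Representation ℂ Γ W) (N : Subgroup Γ)
    (f : V →ₗ[ℂ] W) (hf : GRep.Equivariant ρ σ f) :
    (V ⧸ grpCoinvKer ρ N) →ₗ[ℂ] (W ⧸ grpCoinvKer σ N) :=
  Submodule.mapQ _ _ f (grpCoinvKer_le_comap ρ σ N f hf)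

end Grp

/-! ### Tate L-factors of finite-dimensional `T`-modules. -/

section Lfactor

variable {K : Type*} [NontriviallyNormedField K]
variable {X : Type*} [AddCommGroup X] [Module ℂ X]

/-- The part of a `T`-module where the `χ`-twisted action is unramified
(trivial on the norm-one units). -/
def unrPart (τ : Representation ℂ Kˣ X) (χ : Kˣ →* ℂˣ) : Submodule ℂ X where
  carrier := {x | ∀ u : Kˣ, ‖(u : K)‖ = 1 → (χ u : ℂ) • τ u x = x}
  zero_mem' := fun u _ => by simp
  add_mem' {a b} ha hb := fun u hu => by rw [map_add, smul_add, ha u hu, hb u hu]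
  smul_mem' c x hx := fun u hu => by
    rw [map_smul, smul_comm, hx u hu]

lemma unrPart_stable (τ : Representation ℂ Kˣ X) (χ : Kˣ →* ℂˣ) (ϖ : Kˣ) :
    ∀ x ∈ unrPart τ χ, ((χ ϖ : ℂ) • τ ϖ) x ∈ unrPart τ χ := by
  intro x hx u hu
  have comm : τ u (τ ϖ x) = τ ϖ (τ u x) := by
    rw [← Module.End.mul_apply, ← map_mul, mul_comm, map_mul, Module.End.mul_apply]
  calc (χ u : ℂ) • τ u (((χ ϖ : ℂ) • τ ϖ) x)
      = (χ ϖ : ℂ) • ((χ u : ℂ) • τ u (τ ϖ x)) := by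
        rw [LinearMap.smul_apply, map_smul, smul_comm]
    _ = (χ ϖ : ℂ) • τ ϖ ((χ u : ℂ) • τ u x) := by rw [comm, map_smul]
    _ = ((χ ϖ : ℂ) • τ ϖ) x := by rw [hx u hu, LinearMap.smul_apply]

/-- The twisted uniformizer action on the unramified part. -/
def twistOp (τ : Representation ℂ Kˣ X) (χ : Kˣ →* ℂˣ) (ϖ : Kˣ) :
    ↥(unrPart τ χ) →ₗ[ℂ] ↥(unrPart τ χ) :=
  LinearMap.restrict ((χ ϖ : ℂ) • τ ϖ) (unrPart_stable τ χ ϖ)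

/-- The Tate `L`-factor `L(s, χ ⊗ X) = det(1 - q^{-s}·(χ·τ)(ϖ) | X^{unr,χ})⁻¹` of a
(finite-dimensional) `T`-module `X`, relative to a uniformizer `ϖ`. -/
def Lfactor (τ : Representation ℂ Kˣ X) (χ : Kˣ →* ℂˣ) (ϖ : Kˣ) (s : ℂ) : ℂ :=
  (LinearMap.det (LinearMap.id - (‖(ϖ : K)‖ : ℂ) ^ s • twistOp τ χ ϖ))⁻¹

end Lfactor

/-! ### The concrete `TS`-modules `𝕊`, `C_c^∞(k)`, `C_b^∞(k^×)` and `𝔼[χ]`. -/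

section Concrete

open Aff

variable (K : Type*) [NontriviallyNormedField K]

/-- The representation of `TS` on functions on `k^×`:
`(s_b g)(x) = ψ(bx) g(x)`, `(x_λ g)(x) = g(xλ)`. -/
def repCx (ψ : AddChar K ℂ) : Rep K (Kˣ → ℂ) where
  toFun g :=
    { toFun := fun f x => ψ (g.s * (x : K)) * f (x * g.t)
      map_add' := fun f₁ f₂ => by funext x; simp [mul_add]
      map_smul' := fun c f => by
        funext x
        simp only [Pi.smul_apply, smul_eq_mul, RingHom.id_apply]
        ring }
  map_one' := by
    apply LinearMap.ext; intro f; funext x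
    simp
  map_mul' g h := by
    apply LinearMap.ext; intro f; funext x
    show ψ ((g.s + (g.t : K) * h.s) * (x : K)) * f (x * (g.t * h.t))
        = ψ (g.s * (x : K)) * (ψ (h.s * ((x * g.t : Kˣ) : K)) * f (x * g.t * h.t))
    have harg : (g.s + (g.t : K) * h.s) * (x : K)
        = g.s * (x : K) + h.s * ((x * g.t : Kˣ) : K) := by
      push_cast
      ring
    rw [harg, AddChar.map_add_eq_mul, ← mul_assoc x g.t h.t]
    ring

@[simp] lemma repCx_apply (ψ : AddChar K ℂ) (g : Aff K) (f : Kˣ → ℂ) (x : Kˣ) :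
    repCx K ψ g f x = ψ (g.s * (x : K)) * f (x * g.t) := rfl

/-- The `χ`-twisted representation of `TS` on functions on `k`:
`(s_b g)(x) = ψ(bx) g(x)`, `(x_λ g)(x) = χ(λ) g(xλ)`.  (Take `χ = 1` for the
untwisted action on `C_c^∞(k)`; the module `𝔼[χ]` is `C_c^∞(k)` with the twisted action.) -/
def repCc (ψ : AddChar K ℂ) (χ : Kˣ →* ℂˣ) : Rep K (K → ℂ) where
  toFun g :=
    { toFun := fun f x => (χ g.t : ℂ) * ψ (g.s * x) * f (x * (g.t : K))
      map_add' := fun f₁ f₂ => by funext x; simp [mul_add]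
      map_smul' := fun c f => by
        funext x
        simp only [Pi.smul_apply, smul_eq_mul, RingHom.id_apply]
        ring }
  map_one' := by
    apply LinearMap.ext; intro f; funext x
    simp
  map_mul' g h := by
    apply LinearMap.ext; intro f; funext x
    show (χ (g.t * h.t) : ℂ) * ψ ((g.s + (g.t : K) * h.s) * x) * f (x * ((g.t * h.t : Kˣ) : K))
        = (χ g.t : ℂ) * ψ (g.s * x) * ((χ h.t : ℂ) * ψ (h.s * (x * (g.t : K)))
            * f (x * (g.t : K) * (h.t : K)))
    have harg : (g.s + (g.t : K) * h.s) * x = g.s * x + h.s * (x * (g.t : K)) := by ring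
    have harg2 : x * ((g.t * h.t : Kˣ) : K) = x * (g.t : K) * (h.t : K) := by
      push_cast
      ring
    rw [harg, harg2, AddChar.map_add_eq_mul, map_mul]
    push_cast
    ring

@[simp] lemma repCc_apply (ψ : AddChar K ℂ) (χ : Kˣ →* ℂˣ) (g : Aff K) (f : K → ℂ) (x : K) :
    repCc K ψ χ g f x = (χ g.t : ℂ) * ψ (g.s * x) * f (x * (g.t : K)) := rfl

/-- The one-dimensional `TS`-module `ℂ_χ` on which `S` acts trivially and `x_λ` by `χ(λ)`. -/
def chiRep (χ : Kˣ →* ℂˣ) : Rep K ℂ where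
  toFun g := (χ g.t : ℂ) • LinearMap.id
  map_one' := by
    apply LinearMap.ext; intro c
    simp
  map_mul' g h := by
    apply LinearMap.ext; intro c
    simp only [mul_t, map_mul, LinearMap.smul_apply, LinearMap.id_apply, Module.End.mul_apply,
      Units.val_mul, smul_eq_mul]
    ring

/-- `C_c^∞(k)`: locally constant, compactly supported functions on `k`. -/
def CcK : Submodule ℂ (K → ℂ) where
  carrier := {f | IsLocallyConstant f ∧ HasCompactSupport f}
  zero_mem' := ⟨IsLocallyConstant.const 0, by
    rw [hasCompactSupport_def]
    simp⟩
  add_mem' {a b} ha hb := ⟨ha.1.comp₂ hb.1 (· + ·), ha.2.add hb.2⟩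
  smul_mem' c f hf := by
    refine ⟨?_, hf.2.mono (Function.support_const_smul_subset c f)⟩
    exact hf.1.comp (fun z => c * z)

@[simp] lemma mem_CcK (f : K → ℂ) :
    f ∈ CcK K ↔ IsLocallyConstant f ∧ HasCompactSupport f := Iff.rfl

/-- `𝕊 = C_c^∞(k^×)`: locally constant, compactly supported functions on `k^×`. -/
def SSx : Submodule ℂ (Kˣ → ℂ) where
  carrier := {f | IsLocallyConstant f ∧ HasCompactSupport f}
  zero_mem' := ⟨IsLocallyConstant.const 0, by
    rw [hasCompactSupport_def]
    simp⟩
  add_mem' {a b} ha hb := ⟨ha.1.comp₂ hb.1 (· + ·), ha.2.add hb.2⟩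
  smul_mem' c f hf := by
    refine ⟨?_, hf.2.mono (Function.support_const_smul_subset c f)⟩
    exact hf.1.comp (fun z => c * z)

@[simp] lemma mem_SSx (f : Kˣ → ℂ) :
    f ∈ SSx K ↔ IsLocallyConstant f ∧ HasCompactSupport f := Iff.rfl

/-- `C_b^∞(k^×)`: locally constant functions on `k^×` whose support has compact closure
in `k`. -/
def Cb : Submodule ℂ (Kˣ → ℂ) where
  carrier := {f | IsLocallyConstant f ∧
    IsCompact (closure (((↑) : Kˣ → K) '' Function.support f))}
  zero_mem' := ⟨IsLocallyConstant.const 0, by simp⟩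
  add_mem' {a b} ha hb := by
    refine ⟨ha.1.comp₂ hb.1 (· + ·), ?_⟩
    refine IsCompact.of_isClosed_subset (ha.2.union hb.2) isClosed_closure ?_
    refine closure_minimal ?_ (ha.2.isClosed.union hb.2.isClosed)
    refine (Set.image_mono (Function.support_add _ _)).trans ?_
    rw [Set.image_union]
    exact Set.union_subset_union subset_closure subset_closure
  smul_mem' c f hf := by
    refine ⟨hf.1.comp (fun z => c * z), ?_⟩
    refine IsCompact.of_isClosed_subset hf.2 isClosed_closure ?_
    refine closure_mono ?_
    exact Set.image_mono (Function.support_const_smul_subset c f)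

@[simp] lemma mem_Cb (f : Kˣ → ℂ) :
    f ∈ Cb K ↔ IsLocallyConstant f ∧
      IsCompact (closure (((↑) : Kˣ → K) '' Function.support f)) := Iff.rfl

variable {K}

lemma SSx_invariant (ψ : AddChar K ℂ) (hψlc : IsLocallyConstant (⇑ψ)) :
    GRep.Invariant (repCx K ψ) (SSx K) := by
  rintro g f hf
  rw [mem_SSx] at hf ⊢
  obtain ⟨hlc, hcs⟩ := hf
  have heq : repCx K ψ g f
      = (fun x : Kˣ => ψ (g.s * (x : K))) * (f ∘ (Homeomorph.mulRight g.t)) := rfl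
  constructor
  · rw [heq]
    refine IsLocallyConstant.mul ?_ ?_
    · exact hψlc.comp_continuous (continuous_const.mul Units.continuous_val)
    · exact hlc.comp_continuous (Homeomorph.mulRight g.t).continuous
  · rw [heq]
    exact (hcs.comp_homeomorph (Homeomorph.mulRight g.t)).mul_left

lemma CcK_invariant (ψ : AddChar K ℂ) (hψlc : IsLocallyConstant (⇑ψ)) (χ : Kˣ →* ℂˣ) :
    GRep.Invariant (repCc K ψ χ) (CcK K) := by
  rintro g f hf
  rw [mem_CcK] at hf ⊢
  obtain ⟨hlc, hcs⟩ := hf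
  have hne : ((g.t : Kˣ) : K) ≠ 0 := g.t.ne_zero
  have heq : repCc K ψ χ g f
      = (fun x : K => (χ g.t : ℂ) * ψ (g.s * x)) * (f ∘ (Homeomorph.mulRight₀ (g.t : K) hne)) :=
    rfl
  constructor
  · rw [heq]
    refine IsLocallyConstant.mul ?_ ?_
    · exact ((hψlc.comp_continuous (continuous_const.mul continuous_id)).comp
        (fun z => (χ g.t : ℂ) * z))
    · exact hlc.comp_continuous (Homeomorph.mulRight₀ (g.t : K) hne).continuous
  · rw [heq]
    exact (hcs.comp_homeomorph (Homeomorph.mulRight₀ (g.t : K) hne)).mul_left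

/-- The `TS`-module `𝕊 = C_c^∞(k^×)`. -/
def SRep (ψ : AddChar K ℂ) (hψlc : IsLocallyConstant (⇑ψ)) : Rep K ↥(SSx K) :=
  GRep.sub (repCx K ψ) (SSx_invariant ψ hψlc)

/-- The `TS`-module `𝔼[χ]`, i.e. `C_c^∞(k)` with the `χ`-twisted action. -/
def ERep (ψ : AddChar K ℂ) (hψlc : IsLocallyConstant (⇑ψ)) (χ : Kˣ →* ℂˣ) : Rep K ↥(CcK K) :=
  GRep.sub (repCc K ψ χ) (CcK_invariant ψ hψlc χ)

/-- The `TS`-module `𝕊^s`, a direct sum of `s` copies of `𝕊`. -/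
def SRepPow (ψ : AddChar K ℂ) (hψlc : IsLocallyConstant (⇑ψ)) (s : ℕ) :
    Rep K (Fin s → ↥(SSx K)) where
  toFun g := LinearMap.pi fun i => (SRep ψ hψlc g).comp (LinearMap.proj i)
  map_one' := by
    apply LinearMap.ext; intro v; funext i
    simp
  map_mul' g h := by
    apply LinearMap.ext; intro v; funext i
    simp [map_mul]

/-- The submodule `E` of `C_b^∞(k^×)` consisting of functions which are `χ`-eigenvectors
modulo `𝕊`; the quotient `E/𝕊` is the `χ`-eigenspace of `C_b^∞(k^×)/𝕊`. -/
def quotEigen (ψ : AddChar K ℂ) (χ : Kˣ →* ℂˣ) : Submodule ℂ (Kˣ → ℂ) where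
  carrier := {f | f ∈ Cb K ∧ ∀ u : Kˣ, repCx K ψ (Aff.xT u) f - (χ u : ℂ) • f ∈ SSx K}
  zero_mem' := ⟨(Cb K).zero_mem, fun u => by simpa using (SSx K).zero_mem⟩
  add_mem' {a b} ha hb := by
    refine ⟨(Cb K).add_mem ha.1 hb.1, fun u => ?_⟩
    rw [map_add, smul_add, add_sub_add_comm]
    exact (SSx K).add_mem (ha.2 u) (hb.2 u)
  smul_mem' c f hf := by
    refine ⟨(Cb K).smul_mem c hf.1, fun u => ?_⟩
    rw [map_smul, smul_comm, ← smul_sub]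
    exact (SSx K).smul_mem c (hf.2 u)

/-- Evaluation at `0 ∈ k`, realizing the quotient map `𝔼[χ] → ℂ_χ` with kernel `𝕊`. -/
def ev0 : ↥(CcK K) →ₗ[ℂ] ℂ where
  toFun f := (f : K → ℂ) 0
  map_add' f g := rfl
  map_smul' c f := rfl

end Concrete

/-! ### The diagonal torus in GL(2). -/

section GL2

variable {K : Type*} [Field K]

/-- The diagonal element `diag(a, b)` of `GL(2, K)`. -/
def diagGL (a b : Kˣ) : Matrix.GeneralLinearGroup (Fin 2) K where
  val := Matrix.diagonal ![(a : K), (b : K)]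
  inv := Matrix.diagonal ![((a : K))⁻¹, ((b : K))⁻¹]
  val_inv := by
    ext i j
    fin_cases i <;> fin_cases j <;>
      simp [Matrix.mul_apply, Fin.sum_univ_two, Matrix.diagonal, Matrix.one_apply,
        a.ne_zero, b.ne_zero]
  inv_val := by
    ext i j
    fin_cases i <;> fin_cases j <;>
      simp [Matrix.mul_apply, Fin.sum_univ_two, Matrix.diagonal, Matrix.one_apply,
        a.ne_zero, b.ne_zero]

end GL2

/-!
Let `V` be an extension of `ℂ_χ` by `𝕊`. Since `S` acts trivially on `V / 𝕊`, the vector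
`s_b v - v` lies in `𝕊` for every `v ∈ V`. Choosing `b` with `ψ (b x) ≠ 1` and dividing its value
at `x` by `ψ (b x) - 1` recovers `v x` when `v ∈ 𝕊`. This defines the Kirillov map, an equivariant
extension of the inclusion of `𝕊` to a map `κ` from `V` to the functions on `K^×`.

Every `κ v` is locally constant by smoothness, vanishes near infinity because it is fixed by `s_b`
for small `b`, and is a multiple of `χ` near `0` because `T` acts by `χ` modulo `𝕊`. Functions of
this kind form a copy of `𝔼[χ]`, in which `𝕊` has codimension one. If `κ` is not injective, its
kernel is an invariant complement of `𝕊` and the extension splits; if `κ` is injective, its image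
strictly contains `𝕊`, hence is this copy of `𝔼[χ]`. The extension `𝔼[χ]` itself does not split
because it has no nonzero `S`-invariant vector.
-/

section Representations

namespace GRep

variable {G : Type*} [Monoid G]
variable {V W X : Type*} [AddCommMonoid V] [Module ℂ V] [AddCommMonoid W] [Module ℂ W]
  [AddCommMonoid X] [Module ℂ X]

lemma Iso.of_range_eq {ρ : Representation ℂ G V} {σ : Representation ℂ G W}
    {τ : Representation ℂ G X} {f : V →ₗ[ℂ] X} {g : W →ₗ[ℂ] X}
    (hf : Equivariant ρ τ f) (hg : Equivariant σ τ g)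
    (hf_inj : Function.Injective f) (hg_inj : Function.Injective g)
    (h : LinearMap.range f = LinearMap.range g) : Iso ρ σ := by
  let e : V ≃ₗ[ℂ] W := LinearEquiv.ofInjective f hf_inj ≪≫ₗ LinearEquiv.ofEq _ _ h ≪≫ₗ
    (LinearEquiv.ofInjective g hg_inj).symm
  have g_e (v : V) : g (e v) = f v :=
    congrArg Subtype.val ((LinearEquiv.ofInjective g hg_inj).apply_symm_apply _)
  exact ⟨e, fun γ v => hg_inj (by rw [g_e, hg, g_e, hf])⟩

end GRep

open Aff

variable {K : Type*} [NontriviallyNormedField K] {χ : Kˣ →* ℂˣ}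
variable {V : Type*} [AddCommGroup V] [Module ℂ V] {ρ : Rep K V} {π : V →ₗ[ℂ] ℂ}

lemma exists_section_of_disjoint_ker (hπ : GRep.Equivariant ρ (chiRep K χ) π)
    {U : Submodule ℂ V} (hU : GRep.Invariant ρ U) (hU_ne : U ≠ ⊥)
    (hU_disj : Disjoint U (LinearMap.ker π)) :
    ∃ σ : ℂ →ₗ[ℂ] V, GRep.Equivariant (chiRep K χ) ρ σ ∧ π.comp σ = LinearMap.id := by
  have eq_zero_of_mem {w : V} (hw : w ∈ U) (h : π w = 0) : w = 0 :=
    Submodule.disjoint_def.1 hU_disj w hw h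
  obtain ⟨w, hw, hw_ne⟩ := U.ne_bot_iff.1 hU_ne
  have hπw : π w ≠ 0 := fun h => hw_ne (eq_zero_of_mem hw h)
  have w_eigen (g : Aff K) : ρ g w = (χ g.t : ℂ) • w :=
    sub_eq_zero.1 <| eq_zero_of_mem (U.sub_mem (hU g w hw) (U.smul_mem _ hw)) <| by
      simp [hπ g w, chiRep]
  refine ⟨LinearMap.toSpanSingleton ℂ V ((π w)⁻¹ • w), fun g z => ?_, ?_⟩
  · simp only [LinearMap.toSpanSingleton_apply, map_smul, w_eigen, chiRep, MonoidHom.coe_mk,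
      OneHom.coe_mk, LinearMap.smul_apply, LinearMap.id_apply, smul_smul, smul_eq_mul]
    congr 1
    ring
  · ext
    simp [hπw]

lemma IsSmoothRep.eventually_nhds_one (hρ : IsSmoothRep ρ) (v : V) :
    ∀ᶠ g in nhds (1 : Aff K), ρ g v = v :=
  (hρ v).mem_nhds (by simp)

end Representations

section UnitGroup

open Aff Filter Topology Bornology

section NormedField

variable (K : Type*) [NormedField K]

/-- The end of `K^×` at `0`: the trace on the units of the neighbourhoods of `0` in `K`. -/
def zeroEnd : Filter Kˣ := comap Units.val (𝓝 0)

/-- The end of `K^×` at infinity: the trace on the units of the complements of bounded sets. -/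
def inftyEnd : Filter Kˣ := comap Units.val (cobounded K)

variable {K}

lemma hasBasis_zeroEnd :
    (zeroEnd K).HasBasis (fun ε : ℝ => 0 < ε) fun ε => {x : Kˣ | ‖(x : K)‖ < ε} :=
  (Metric.nhds_basis_ball.comap Units.val).congr (fun _ => Iff.rfl) fun ε _ => by
    ext x
    simp

lemma comap_inv_cocompact_eq_zeroEnd [ProperSpace K] :
    comap (fun x : Kˣ => (x⁻¹ : Kˣ).val) (cocompact K) = zeroEnd K := by
  have comap_inv : comap Inv.inv (cobounded K) = 𝓝[≠] 0 := by
    rw [Filter.comap_inv, inv_cobounded₀]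
  have val_inv : (fun x : Kˣ => (x⁻¹ : Kˣ).val) = Inv.inv ∘ Units.val := by
    ext x
    simp
  have preimage_ne_zero : (Units.val : Kˣ → K) ⁻¹' {0}ᶜ = Set.univ :=
    Set.eq_univ_of_forall Units.ne_zero
  rw [← Metric.cobounded_eq_cocompact, val_inv, ← comap_comap, comap_inv, nhdsWithin, comap_inf,
    comap_principal, preimage_ne_zero, principal_univ, inf_top_eq, zeroEnd]

lemma cocompact_units_eq_sup [ProperSpace K] : cocompact Kˣ = zeroEnd K ⊔ inftyEnd K := by
  have comap_embedProduct :
      cocompact Kˣ = comap (Units.embedProduct K) (cocompact (K × Kᵐᵒᵖ)) :=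
    (Units.isClosedEmbedding_embedProduct.tendsto_cocompact.le_comap).antisymm
      (comap_cocompact_le Units.isClosedEmbedding_embedProduct.continuous)
  rw [comap_embedProduct, ← coprod_cocompact, Filter.coprod, comap_sup, comap_comap, comap_comap,
    ← MulOpposite.opHomeomorph.symm.comap_cocompact, comap_comap, sup_comm,
    ← comap_inv_cocompact_eq_zeroEnd, inftyEnd, Metric.cobounded_eq_cocompact]
  rfl

lemma tendsto_const_mul_inv_inftyEnd (a : K) :
    Tendsto (fun x : Kˣ => a * (x : K)⁻¹) (inftyEnd K) (𝓝 0) := by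
  have tendsto_inv : Tendsto (fun x : Kˣ => (x : K)⁻¹) (inftyEnd K) (𝓝 0) :=
    tendsto_inv₀_cobounded.comp tendsto_comap
  simpa using tendsto_inv.const_mul a

end NormedField

variable {K : Type*} [NontriviallyNormedField K]

instance zeroEnd_neBot : (zeroEnd K).NeBot :=
  hasBasis_zeroEnd.neBot_iff.2 fun hε =>
    let ⟨z, hz_pos, hz_lt⟩ := NormedField.exists_norm_lt K hε
    ⟨Units.mk0 z (norm_pos_iff.1 hz_pos), hz_lt⟩

lemma continuous_sS : Continuous (sS : K → Aff K) :=
  continuous_induced_rng.2 (continuous_const.prodMk continuous_id)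

lemma continuous_xT : Continuous (xT : Kˣ → Aff K) :=
  continuous_induced_rng.2 (continuous_id.prodMk continuous_const)

lemma SmoothMulChar.of_equivariant {χ : Kˣ →* ℂˣ} {V : Type*} [AddCommGroup V] [Module ℂ V]
    {ρ : Rep K V} (hρ : IsSmoothRep ρ) {π : V →ₗ[ℂ] ℂ}
    (hπ : GRep.Equivariant ρ (chiRep K χ) π) (hπ_ne : π ≠ 0) : SmoothMulChar χ := by
  obtain ⟨v, hv⟩ : ∃ v, π v ≠ 0 := by
    contrapose! hπ_ne
    exact LinearMap.ext hπ_ne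
  refine Subgroup.isOpen_of_mem_nhds χ.ker (g := 1) ?_
  filter_upwards [continuous_xT.tendsto 1 (hρ.eventually_nhds_one v)] with u hu
  have fixed : ρ (xT u) v = v := hu
  have hχ : (χ u : ℂ) * π v = 1 * π v := by simpa [chiRep, fixed] using (hπ (xT u) v).symm
  exact MonoidHom.mem_ker.2 (Units.ext (mul_right_cancel₀ hv hχ))

lemma isLocallyConstant_of_eventually_mul_eq {G α : Type*} [Group G] [TopologicalSpace G]
    [SeparatelyContinuousMul G] {f : G → α} (hf : ∀ᶠ w in 𝓝 1, ∀ x, f (x * w) = f x) :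
    IsLocallyConstant f := by
  refine (IsLocallyConstant.iff_eventually_eq f).2 fun x => ?_
  have tendsto_one : Tendsto (fun y => x⁻¹ * y) (𝓝 x) (𝓝 1) := by
    simpa using (continuous_const_mul x⁻¹).tendsto x
  filter_upwards [tendsto_one.eventually hf] with y hy
  simpa using hy x

lemma SmoothMulChar.eventually_eq_one {χ : Kˣ →* ℂˣ} (hχ : SmoothMulChar χ) :
    ∀ᶠ w in 𝓝 1, χ w = 1 :=
  hχ.mem_nhds (map_one χ)

lemma SmoothMulChar.isLocallyConstant {χ : Kˣ →* ℂˣ} (hχ : SmoothMulChar χ) :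
    IsLocallyConstant χ :=
  isLocallyConstant_of_eventually_mul_eq <| hχ.eventually_eq_one.mono fun w hw x => by
    rw [map_mul, hw, mul_one]

lemma isLocallyConstant_iff_units [CompleteSpace K] {α : Type*} {f : K → α} :
    IsLocallyConstant f ↔
      IsLocallyConstant (fun x : Kˣ => f x) ∧ ∀ᶠ x : Kˣ in zeroEnd K, f x = f 0 := by
  refine ⟨fun hf => ⟨hf.comp_continuous Units.continuous_val,
    (hf.eventually_eq 0).comap Units.val⟩, fun ⟨hf_units, hf_zero⟩ => ?_⟩
  refine (IsLocallyConstant.iff_eventually_eq f).2 fun x => ?_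
  obtain rfl | hx := eq_or_ne x 0
  · filter_upwards [eventually_comap.1 hf_zero] with y hy
    obtain rfl | hy_ne := eq_or_ne y 0
    · rfl
    · exact hy (Units.mk0 y hy_ne) rfl
  · rw [← Units.val_mk0 hx, ← Units.isOpenEmbedding_val.map_nhds_eq, eventually_map]
    exact hf_units.eventually_eq (Units.mk0 x hx)

lemma eventually_forall_mem_mul_eq {G α : Type*} [Group G] [TopologicalSpace G]
    [SeparatelyContinuousMul G] {l : Filter G} {f : G → α}
    (hf_one : ∀ᶠ w in 𝓝 1, ∀ x, f (x * w) = f x) (hf : ∀ u, ∀ᶠ x in l, f (x * u) = f x)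
    {B : Set G} (hB : IsCompact B) :
    ∀ᶠ x in l, ∀ u ∈ B, f (x * u) = f x := by
  have near (u : G) : ∀ᶠ p in l ×ˢ 𝓝 u, f (p.1 * p.2) = f p.1 := by
    have tendsto_one : Tendsto (fun v => u⁻¹ * v) (𝓝 u) (𝓝 1) := by
      simpa using (continuous_const_mul u⁻¹).tendsto u
    filter_upwards [(hf u).prod_mk (tendsto_one.eventually hf_one)] with ⟨x, v⟩ ⟨hx, hv⟩
    simpa [mul_assoc, hx] using hv (x * u)
  have uniform : ∀ᶠ p in l ×ˢ 𝓝ˢ B, f (p.1 * p.2) = f p.1 :=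
    hB.mem_prod_nhdsSet_of_forall fun u _ => near u
  filter_upwards [uniform.curry] with x hx
  exact subset_of_mem_nhdsSet hx

lemma isCompact_annulus [ProperSpace K] {a : ℝ} (ha : 0 < a) (b : ℝ) :
    IsCompact {u : Kˣ | a ≤ ‖(u : K)‖ ∧ ‖(u : K)‖ ≤ b} := by
  have annulus_compl : ∀ᶠ u : Kˣ in cocompact Kˣ, ¬ (a ≤ ‖(u : K)‖ ∧ ‖(u : K)‖ ≤ b) := by
    rw [cocompact_units_eq_sup, eventually_sup]
    refine ⟨hasBasis_zeroEnd.mem_iff.2 ⟨a, ha, fun u hu h => hu.not_ge h.1⟩, ?_⟩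
    have large : ∀ᶠ x in cobounded K, b < ‖x‖ := tendsto_norm_cobounded_atTop.eventually_gt_atTop b
    exact (large.comap Units.val).mono fun u hu h => hu.not_ge h.2
  obtain ⟨B, hB, hB_sub⟩ := mem_cocompact.1 annulus_compl
  refine hB.of_isClosed_subset ?_ fun u hu => by_contra fun huB => hB_sub huB hu
  exact (isClosed_le continuous_const Units.continuous_val.norm).inter
    (isClosed_le Units.continuous_val.norm continuous_const)

/-- The translates `t ^ n • {‖t‖ ≤ ‖u‖ ≤ 1}` of a compact annulus cover a punctured disc, so
invariance under multiplication by the annulus compares any two points near `0`. -/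
lemma exists_eventually_zeroEnd_eq_const [ProperSpace K] {α : Type*} {f : Kˣ → α}
    (hf_one : ∀ᶠ w in 𝓝 (1 : Kˣ), ∀ x, f (x * w) = f x)
    (hf_zero : ∀ u, ∀ᶠ x in zeroEnd K, f (x * u) = f x) :
    ∃ c, ∀ᶠ x in zeroEnd K, f x = c := by
  obtain ⟨z, hz_pos, hz_lt⟩ := NormedField.exists_norm_lt_one K
  let t : Kˣ := Units.mk0 z (norm_pos_iff.1 hz_pos)
  obtain ⟨ε, hε, hf_annulus⟩ := hasBasis_zeroEnd.eventually_iff.1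
    (eventually_forall_mem_mul_eq hf_one hf_zero (isCompact_annulus hz_pos 1))
  obtain ⟨x₀, hx₀⟩ : {x : Kˣ | ‖(x : K)‖ < ε}.Nonempty :=
    nonempty_of_mem (hasBasis_zeroEnd.mem_of_mem hε)
  have norm_mul_pow_lt (n : ℕ) : ‖((x₀ * t ^ n : Kˣ) : K)‖ < ε := by
    simpa [t] using (mul_le_of_le_one_right (norm_nonneg _)
      (pow_le_one₀ hz_pos.le hz_lt.le)).trans_lt hx₀
  have f_mul_pow (n : ℕ) : f (x₀ * t ^ n) = f x₀ := by
    induction n with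
    | zero => simp
    | succ n ih =>
      rw [pow_succ, ← mul_assoc, hf_annulus (norm_mul_pow_lt n) t ⟨le_rfl, hz_lt.le⟩, ih]
  refine ⟨f x₀, hasBasis_zeroEnd.eventually_iff.2 ⟨‖(x₀ : K)‖, by simp, fun x hx => ?_⟩⟩
  obtain ⟨n, hn_lt, hn_le⟩ := exists_nat_pow_near_of_lt_one (x := ‖(x : K)‖ / ‖(x₀ : K)‖)
    (by simp) ((div_le_one (by simp)).2 (le_of_lt hx)) hz_pos hz_lt
  have pow_pos : 0 < ‖z‖ ^ n := pow_pos hz_pos n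
  have x_eq : x = x₀ * t ^ n * ((x₀ * t ^ n)⁻¹ * x) := by group
  have norm_u : ‖(((x₀ * t ^ n)⁻¹ * x : Kˣ) : K)‖ = ‖(x : K)‖ / ‖(x₀ : K)‖ / ‖z‖ ^ n := by
    simp [t]
    field_simp
  rw [x_eq, hf_annulus (norm_mul_pow_lt n), f_mul_pow]
  rw [Set.mem_ofPred_eq, norm_u, le_div_iff₀ pow_pos, div_le_one pow_pos]
  exact ⟨by rw [← pow_succ']; exact hn_lt.le, hn_le⟩

end UnitGroup

section FunctionSpaces

open Aff Filter Topology Bornology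

variable {K : Type*} [NontriviallyNormedField K]

section ProperSpace

variable [ProperSpace K]

lemma mem_SSx_iff {f : Kˣ → ℂ} :
    f ∈ SSx K ↔ IsLocallyConstant f ∧ (∀ᶠ x in zeroEnd K, f x = 0) ∧
      ∀ᶠ x in inftyEnd K, f x = 0 := by
  rw [mem_SSx, hasCompactSupport_iff_eventuallyEq, coclosedCompact_eq_cocompact,
    cocompact_units_eq_sup, EventuallyEq, eventually_sup]
  rfl

lemma mem_CcK_iff {f : K → ℂ} :
    f ∈ CcK K ↔ IsLocallyConstant (fun x : Kˣ => f x) ∧ (∀ᶠ x : Kˣ in zeroEnd K, f x = f 0) ∧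
      ∀ᶠ x : Kˣ in inftyEnd K, f x = 0 := by
  have compact_iff : HasCompactSupport f ↔ ∀ᶠ x : Kˣ in inftyEnd K, f x = 0 := by
    rw [hasCompactSupport_iff_eventuallyEq, coclosedCompact_eq_cocompact,
      ← Metric.cobounded_eq_cocompact, inftyEnd, eventually_comap]
    refine eventually_congr ((eventually_ne_cobounded 0).mono fun x hx => ?_)
    exact ⟨fun h u hu => hu ▸ h, fun h => h (Units.mk0 x hx) rfl⟩
  rw [mem_CcK, isLocallyConstant_iff_units, compact_iff, and_assoc]

end ProperSpace

section KirillovModel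

/-- The embedding `g ↦ χ · g|_{K^×}` of `𝔼[χ]` into the functions on `K^×`. The twist by `χ`
makes it equivariant for the action `repCx` on functions, which involves no character `χ`. -/
def kirillovEmbedding (χ : Kˣ →* ℂˣ) : ↥(CcK K) →ₗ[ℂ] Kˣ → ℂ where
  toFun g x := χ x * (g : K → ℂ) x
  map_add' g h := by
    ext x
    simp [mul_add]
  map_smul' c g := by
    ext x
    simp [mul_left_comm]

/-- The realisation of `𝔼[χ]` by functions on `K^×`, on which `TS` acts by `repCx`. -/
def kirillovModel (χ : Kˣ →* ℂˣ) : Submodule ℂ (Kˣ → ℂ) :=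
  LinearMap.range (kirillovEmbedding χ)

variable {χ : Kˣ →* ℂˣ}

lemma kirillovEmbedding_apply (g : ↥(CcK K)) (x : Kˣ) :
    kirillovEmbedding χ g x = χ x * (g : K → ℂ) x := rfl

lemma kirillovEmbedding_equivariant (ψ : AddChar K ℂ) (hψlc : IsLocallyConstant ψ) :
    GRep.Equivariant (ERep ψ hψlc χ) (repCx K ψ) (kirillovEmbedding χ) := fun g f => by
  ext x
  simp only [kirillovEmbedding_apply, ERep, GRep.sub_apply, repCc_apply, repCx_apply, map_mul,
    Units.val_mul]
  ring

lemma kirillovEmbedding_injective : Function.Injective (kirillovEmbedding (K := K) χ) := by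
  refine (injective_iff_map_eq_zero _).2 fun g hg => Subtype.ext <| funext fun x => ?_
  have zero_on_units (u : Kˣ) : (g : K → ℂ) u = 0 := by
    simpa [kirillovEmbedding_apply] using congrFun hg u
  obtain rfl | hx := eq_or_ne x 0
  · have near_zero : ∀ᶠ u : Kˣ in zeroEnd K, (g : K → ℂ) u = (g : K → ℂ) 0 :=
      (g.2.1.eventually_eq 0).comap Units.val
    obtain ⟨u, hu⟩ := near_zero.exists
    exact hu.symm.trans (zero_on_units u)
  · exact zero_on_units (Units.mk0 x hx)

variable [ProperSpace K]

lemma mem_kirillovModel_iff (hχ : IsLocallyConstant χ) {f : Kˣ → ℂ} :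
    f ∈ kirillovModel χ ↔ IsLocallyConstant f ∧ (∃ c, ∀ᶠ x in zeroEnd K, f x = χ x * c) ∧
      ∀ᶠ x in inftyEnd K, f x = 0 := by
  constructor
  · rintro ⟨g, rfl⟩
    obtain ⟨hg_lc, hg_zero, hg_infty⟩ := mem_CcK_iff.1 g.2
    refine ⟨(hχ.comp Units.val).mul hg_lc, ⟨(g : K → ℂ) 0, ?_⟩, ?_⟩
    · exact hg_zero.mono fun x hx => by rw [kirillovEmbedding_apply, hx]
    · exact hg_infty.mono fun x hx => by rw [kirillovEmbedding_apply, hx, mul_zero]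
  · rintro ⟨hf_lc, ⟨c, hf_zero⟩, hf_infty⟩
    let g : K → ℂ := Function.extend Units.val (fun x => (χ x : ℂ)⁻¹ * f x) fun _ => c
    have g_unit (x : Kˣ) : g x = (χ x : ℂ)⁻¹ * f x := Units.val_injective.extend_apply _ _ x
    have g_zero : g 0 = c := Function.extend_apply' _ _ _ fun ⟨x, hx⟩ => x.ne_zero hx
    have hg : g ∈ CcK K := by
      refine mem_CcK_iff.2 ⟨?_, ?_, ?_⟩
      · simp only [g_unit]
        exact (hχ.comp fun z => (z : ℂ)⁻¹).mul hf_lc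
      · exact hf_zero.mono fun x hx => by simp [g_unit, g_zero, hx]
      · exact hf_infty.mono fun x hx => by simp [g_unit, hx]
    refine ⟨⟨g, hg⟩, funext fun x => ?_⟩
    simp [kirillovEmbedding_apply, g_unit]

lemma SSx_wcovBy_kirillovModel (hχ : IsLocallyConstant χ) : SSx K ⩿ kirillovModel χ := by
  refine ⟨fun f hf => ?_, fun U hSU hUM => hUM.not_ge fun h hh => ?_⟩
  · obtain ⟨hf_lc, hf_zero, hf_infty⟩ := mem_SSx_iff.1 hf
    exact (mem_kirillovModel_iff hχ).2 ⟨hf_lc, ⟨0, by simpa using hf_zero⟩, hf_infty⟩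
  obtain ⟨f, hfU, hfS⟩ := SetLike.exists_of_lt hSU
  obtain ⟨hf_lc, ⟨c, hf_zero⟩, hf_infty⟩ := (mem_kirillovModel_iff hχ).1 (hUM.le hfU)
  obtain ⟨hh_lc, ⟨d, hh_zero⟩, hh_infty⟩ := (mem_kirillovModel_iff hχ).1 hh
  have hc : c ≠ 0 := fun hc => hfS (mem_SSx_iff.2 ⟨hf_lc, by simpa [hc] using hf_zero, hf_infty⟩)
  have sub_mem : h - (d / c) • f ∈ SSx K := by
    refine mem_SSx_iff.2 ⟨hh_lc.sub (hf_lc.comp fun z => (d / c) • z), ?_, ?_⟩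
    · filter_upwards [hf_zero, hh_zero] with x hfx hhx
      simp only [Pi.sub_apply, Pi.smul_apply, smul_eq_mul, hfx, hhx]
      field_simp
      ring
    · filter_upwards [hf_infty, hh_infty] with x hfx hhx
      simp [hfx, hhx]
  simpa using U.add_mem (hSU.le sub_mem) (U.smul_mem (d / c) hfU)

end KirillovModel

section Smoothness

variable {ψ : AddChar K ℂ} {χ : Kˣ →* ℂˣ}

lemma eq_zero_of_repCx_sS_eq {a : K} (ha : ψ a ≠ 1) {f : Kˣ → ℂ} {x : Kˣ}
    (hf : repCx K ψ (sS (a * (x : K)⁻¹)) f = f) : f x = 0 := by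
  have ψ_mul : ψ a * f x = f x := by simpa using congrFun hf x
  exact by_contra fun hfx => ha ((mul_eq_right₀ hfx).1 ψ_mul)

lemma sInv_repCx_eq_bot (hψ : ψ ≠ 1) : sInv (repCx K ψ) = ⊥ := by
  obtain ⟨a, ha⟩ := AddChar.ne_one_iff.1 hψ
  exact (Submodule.eq_bot_iff _).2 fun f hf => funext fun x => eq_zero_of_repCx_sS_eq ha (hf _)

lemma mem_kirillovModel_of_smooth [ProperSpace K] (hψ : ψ ≠ 1) (hχ : SmoothMulChar χ)
    {f : Kˣ → ℂ} (hf : ∀ᶠ g in 𝓝 1, repCx K ψ g f = f)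
    (hT : ∀ u, repCx K ψ (xT u) f - (χ u : ℂ) • f ∈ SSx K) : f ∈ kirillovModel χ := by
  have hf_one : ∀ᶠ w in 𝓝 1, ∀ x, f (x * w) = f x :=
    (continuous_xT.tendsto 1 |>.eventually hf).mono fun w hw x => by simpa using congrFun hw x
  refine (mem_kirillovModel_iff hχ.isLocallyConstant).2
    ⟨isLocallyConstant_of_eventually_mul_eq hf_one, ?_, ?_⟩
  · obtain ⟨c, hc⟩ : ∃ c, ∀ᶠ x in zeroEnd K, (χ x : ℂ)⁻¹ * f x = c := by
      refine exists_eventually_zeroEnd_eq_const ?_ fun u => ?_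
      · filter_upwards [hf_one, hχ.eventually_eq_one] with w hfw hχw x
        simp [hfw, hχw]
      · filter_upwards [(mem_SSx_iff.1 (hT u)).2.1] with x hx
        have f_mul : f (x * u) = χ u * f x := by simpa [sub_eq_zero] using hx
        rw [f_mul, map_mul, Units.val_mul]
        field_simp
    exact ⟨c, hc.mono fun x hx => by simp [← hx]⟩
  · obtain ⟨a, ha⟩ := AddChar.ne_one_iff.1 hψ
    have tendsto_one : Tendsto (fun x : Kˣ => sS (a * (x : K)⁻¹)) (inftyEnd K) (𝓝 1) :=
      (continuous_sS.tendsto 0).comp (tendsto_const_mul_inv_inftyEnd a)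
    exact (tendsto_one.eventually hf).mono fun x hx => eq_zero_of_repCx_sS_eq ha hx

end Smoothness

end FunctionSpaces

section KirillovMap

open Aff Filter Topology

variable {K : Type*} [NontriviallyNormedField K] {ψ : AddChar K ℂ} {hψlc : IsLocallyConstant ψ}
variable {V : Type*} [AddCommGroup V] [Module ℂ V] {ρ : Rep K V} {ι : ↥(SSx K) →ₗ[ℂ] V}

/-- The map `v ↦ ι⁻¹ (s_b v - v)`, where `ι` embeds `𝕊` in a module `V` with `S` acting trivially
on `V / 𝕊`. -/
def sDifference (hι : Function.Injective ι)
    (hS : ∀ b v, ρ (sS b) v - v ∈ LinearMap.range ι) (b : K) : V →ₗ[ℂ] ↥(SSx K) :=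
  (LinearEquiv.ofInjective ι hι).symm.toLinearMap ∘ₗ
    (ρ (sS b) - LinearMap.id).codRestrict (LinearMap.range ι) (hS b)

/-- The Kirillov map `v ↦ (x ↦ (s_b v - v)(x) / (ψ (b x) - 1))` from an extension `V` of an
`S`-trivial module by `𝕊` to the functions on `K^×`, where `s_b v - v` is read in `𝕊` and
`b = a / x`, so that `ψ (b x) = ψ a`; it is meant for `a` with `ψ a ≠ 1`. -/
def kirillovMap (ψ : AddChar K ℂ) (hι : Function.Injective ι)
    (hS : ∀ b v, ρ (sS b) v - v ∈ LinearMap.range ι) (a : K) : V →ₗ[ℂ] Kˣ → ℂ :=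
  LinearMap.pi fun x => (ψ a - 1)⁻¹ •
    (LinearMap.proj x ∘ₗ (SSx K).subtype ∘ₗ sDifference hι hS (a * (x : K)⁻¹))

variable {hι : Function.Injective ι} {hS : ∀ b v, ρ (sS b) v - v ∈ LinearMap.range ι} {a : K}

lemma ι_sDifference (b : K) (v : V) : ι (sDifference hι hS b v) = ρ (sS b) v - v :=
  congrArg Subtype.val ((LinearEquiv.ofInjective ι hι).apply_symm_apply _)

lemma kirillovMap_apply (v : V) (x : Kˣ) :
    kirillovMap ψ hι hS a v x =
      (ψ a - 1)⁻¹ * (sDifference hι hS (a * (x : K)⁻¹) v : Kˣ → ℂ) x := rfl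

lemma sDifference_equivariant (hι_equiv : GRep.Equivariant (SRep ψ hψlc) ρ ι)
    (b : K) (g : Aff K) (v : V) :
    sDifference hι hS b (ρ g v) =
      SRep ψ hψlc g (sDifference hι hS (((g.t⁻¹ : Kˣ) : K) * b) v) := by
  refine hι ?_
  rw [ι_sDifference, hι_equiv, ι_sDifference, map_sub, ← Module.End.mul_apply,
    ← Module.End.mul_apply, ← map_mul, ← map_mul, sS_mul]

lemma kirillovMap_equivariant (hι_equiv : GRep.Equivariant (SRep ψ hψlc) ρ ι) :
    GRep.Equivariant ρ (repCx K ψ) (kirillovMap ψ hι hS a) := fun g v => by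
  ext x
  have shift_eq : ((g.t⁻¹ : Kˣ) : K) * (a * (x : K)⁻¹) = a * ((x * g.t : Kˣ) : K)⁻¹ := by
    push_cast
    ring
  rw [kirillovMap_apply, sDifference_equivariant hι_equiv, shift_eq, repCx_apply,
    kirillovMap_apply, SRep, GRep.sub_apply, repCx_apply]
  ring

lemma sDifference_ι (hι_equiv : GRep.Equivariant (SRep ψ hψlc) ρ ι)
    (b : K) (f : ↥(SSx K)) :
    sDifference hι hS b (ι f) = SRep ψ hψlc (sS b) f - f :=
  hι (by rw [ι_sDifference, map_sub, hι_equiv])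

lemma kirillovMap_ι (hι_equiv : GRep.Equivariant (SRep ψ hψlc) ρ ι)
    (ha : ψ a ≠ 1) (f : ↥(SSx K)) : kirillovMap ψ hι hS a (ι f) = f := by
  ext x
  have difference_apply :
      (sDifference hι hS (a * (x : K)⁻¹) (ι f) : Kˣ → ℂ) x = (ψ a - 1) * (f : Kˣ → ℂ) x := by
    simp [sDifference_ι hι_equiv, SRep, sub_mul]
  rw [kirillovMap_apply, difference_apply, inv_mul_cancel_left₀ (sub_ne_zero.2 ha)]

lemma disjoint_ker_kirillovMap (hι_equiv : GRep.Equivariant (SRep ψ hψlc) ρ ι)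
    (ha : ψ a ≠ 1) :
    Disjoint (LinearMap.ker (kirillovMap ψ hι hS a)) (LinearMap.range ι) := by
  refine Submodule.disjoint_def.2 ?_
  rintro _ hf ⟨f, rfl⟩
  have f_eq_zero : f = 0 := Subtype.ext <| by simpa [kirillovMap_ι hι_equiv ha] using hf
  rw [f_eq_zero, map_zero]

variable [ProperSpace K] {χ : Kˣ →* ℂˣ}

lemma range_kirillovMap_le (hι_equiv : GRep.Equivariant (SRep ψ hψlc) ρ ι)
    (ha : ψ a ≠ 1) (hχ : SmoothMulChar χ) (hρ : IsSmoothRep ρ)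
    (hT : ∀ u v, ρ (xT u) v - (χ u : ℂ) • v ∈ LinearMap.range ι) :
    LinearMap.range (kirillovMap ψ hι hS a) ≤ kirillovModel χ := by
  rintro _ ⟨v, rfl⟩
  have κ_equiv := kirillovMap_equivariant (hι := hι) (hS := hS) (a := a) hι_equiv
  refine mem_kirillovModel_of_smooth (AddChar.ne_one_iff.2 ⟨a, ha⟩) hχ ?_ fun u => ?_
  · exact (hρ.eventually_nhds_one v).mono fun g hg => by rw [← κ_equiv, hg]
  · obtain ⟨f, hf⟩ := hT u v
    rw [← κ_equiv, ← map_smul, ← map_sub, ← hf, kirillovMap_ι hι_equiv ha]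
    exact f.2

lemma range_kirillovMap_eq (hι_equiv : GRep.Equivariant (SRep ψ hψlc) ρ ι)
    (ha : ψ a ≠ 1) (hχ : SmoothMulChar χ) (hρ : IsSmoothRep ρ)
    (hT : ∀ u v, ρ (xT u) v - (χ u : ℂ) • v ∈ LinearMap.range ι)
    (hκ : Function.Injective (kirillovMap ψ hι hS a)) (hι_ne : LinearMap.range ι ≠ ⊤) :
    LinearMap.range (kirillovMap ψ hι hS a) = kirillovModel χ := by
  have SSx_le : SSx K ≤ LinearMap.range (kirillovMap ψ hι hS a) := fun f hf =>
    ⟨ι ⟨f, hf⟩, kirillovMap_ι hι_equiv ha _⟩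
  refine ((SSx_wcovBy_kirillovModel hχ.isLocallyConstant).eq_or_eq SSx_le
    (range_kirillovMap_le hι_equiv ha hχ hρ hT)).resolve_left fun range_eq => hι_ne ?_
  refine (Submodule.eq_top_iff').2 fun v => ?_
  have hv : kirillovMap ψ hι hS a v ∈ SSx K := range_eq ▸ LinearMap.mem_range_self _ v
  exact ⟨⟨_, hv⟩, hκ (kirillovMap_ι hι_equiv ha _)⟩

end KirillovMap

section Extensions

open Aff

variable {K : Type*} [NontriviallyNormedField K] {ψ : AddChar K ℂ} {χ : Kˣ →* ℂˣ}

lemma sInv_ERep_eq_bot (hψlc : IsLocallyConstant ψ) (hψ : ψ ≠ 1) :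
    sInv (ERep ψ hψlc χ) = ⊥ := by
  refine (Submodule.eq_bot_iff _).2 fun f hf => kirillovEmbedding_injective (χ := χ) ?_
  have mem_sInv : kirillovEmbedding χ f ∈ sInv (repCx K ψ) := fun b => by
    rw [← kirillovEmbedding_equivariant ψ hψlc, hf b]
  rwa [sInv_repCx_eq_bot hψ, Submodule.mem_bot, ← map_zero (kirillovEmbedding χ)] at mem_sInv

lemma ERep_not_split (hψlc : IsLocallyConstant ψ) (hψ : ψ ≠ 1) :
    ¬ ∃ σ : ℂ →ₗ[ℂ] ↥(CcK K), GRep.Equivariant (chiRep K χ) (ERep ψ hψlc χ) σ ∧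
        (ev0 (K := K)).comp σ = LinearMap.id := by
  rintro ⟨σ, hσ, hσ_section⟩
  have mem_sInv : σ 1 ∈ sInv (ERep ψ hψlc χ) := fun b => by
    rw [← hσ (sS b) 1]
    simp [chiRep]
  rw [sInv_ERep_eq_bot hψlc hψ, Submodule.mem_bot] at mem_sInv
  simpa [mem_sInv] using LinearMap.congr_fun hσ_section 1

lemma split_or_iso_ERep [ProperSpace K] (hψlc : IsLocallyConstant ψ) (hψ : ψ ≠ 1)
    {V : Type*} [AddCommGroup V] [Module ℂ V] {ρ : Rep K V} (hρ : IsSmoothRep ρ)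
    {ι : ↥(SSx K) →ₗ[ℂ] V} (hι : GRep.Equivariant (SRep ψ hψlc) ρ ι)
    (hι_inj : Function.Injective ι) {π : V →ₗ[ℂ] ℂ} (hπ : GRep.Equivariant ρ (chiRep K χ) π)
    (hπ_ne : π ≠ 0) (hexact : LinearMap.ker π = LinearMap.range ι) :
    (∃ σ : ℂ →ₗ[ℂ] V, GRep.Equivariant (chiRep K χ) ρ σ ∧ π.comp σ = LinearMap.id) ∨
      GRep.Iso ρ (ERep ψ hψlc χ) := by
  obtain ⟨a, ha⟩ := AddChar.ne_one_iff.1 hψ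
  have hS (b : K) (v : V) : ρ (sS b) v - v ∈ LinearMap.range ι := by
    rw [← hexact, LinearMap.mem_ker, map_sub, hπ]
    simp [chiRep]
  have hT (u : Kˣ) (v : V) : ρ (xT u) v - (χ u : ℂ) • v ∈ LinearMap.range ι := by
    rw [← hexact, LinearMap.mem_ker, map_sub, hπ]
    simp [chiRep]
  have κ_equiv := kirillovMap_equivariant (hι := hι_inj) (hS := hS) (a := a) hι
  by_cases hκ : LinearMap.ker (kirillovMap ψ hι_inj hS a) = ⊥
  · have hι_ne : LinearMap.range ι ≠ ⊤ := hexact ▸ LinearMap.ker_eq_top.not.2 hπ_ne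
    have hκ_inj := LinearMap.ker_eq_bot.1 hκ
    exact .inr <| GRep.Iso.of_range_eq κ_equiv (kirillovEmbedding_equivariant ψ hψlc) hκ_inj
      kirillovEmbedding_injective
      (range_kirillovMap_eq hι ha (.of_equivariant hρ hπ hπ_ne) hρ hT hκ_inj hι_ne)
  · exact .inl <| exists_section_of_disjoint_ker hπ (GRep.ker_invariant _ _ _ κ_equiv) hκ
      (hexact ▸ disjoint_ker_kirillovMap hι ha)

theorem statement11_general [ProperSpace K]
    (ψ : AddChar K ℂ) (hψlc : IsLocallyConstant (⇑ψ)) (hψne : ψ ≠ 1) (χ : Kˣ →* ℂˣ)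
    {V : Type*} [AddCommGroup V] [Module ℂ V]
    (ρ : Rep K V) (hρ : IsSmoothRep ρ)
    (ι : ↥(SSx K) →ₗ[ℂ] V) (hι : GRep.Equivariant (SRep ψ hψlc) ρ ι)
    (hιinj : Function.Injective ι)
    (π : V →ₗ[ℂ] ℂ) (hπ : GRep.Equivariant ρ (chiRep K χ) π)
    (hπsurj : Function.Surjective π) (hexact : LinearMap.ker π = LinearMap.range ι) :
    ((∃ σ : ℂ →ₗ[ℂ] V, GRep.Equivariant (chiRep K χ) ρ σ ∧ π.comp σ = LinearMap.id) ∨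
      GRep.Iso ρ (ERep ψ hψlc χ)) ∧
    ¬ ∃ σ : ℂ →ₗ[ℂ] ↥(CcK K), GRep.Equivariant (chiRep K χ) (ERep ψ hψlc χ) σ ∧
        (ev0 (K := K)).comp σ = LinearMap.id :=
  ⟨split_or_iso_ERep hψlc hψne hρ hι hιinj hπ (LinearMap.surjective_iff_ne_zero.1 hπsurj) hexact,
    ERep_not_split hψlc hψne⟩

end Extensions

section Statements

open Aff

variable {K : Type*} [NontriviallyNormedField K] [IsUltrametricDist K] [ProperSpace K]

theorem statement11
    (hchar : (2 : K) ≠ 0)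
    (ψ : AddChar K ℂ) (hψlc : IsLocallyConstant (⇑ψ)) (hψne : ψ ≠ 1)
    (χ : Kˣ →* ℂˣ) (hχ : SmoothMulChar χ)
    {V : Type*} [AddCommGroup V] [Module ℂ V]
    (ρ : Rep K V) (hρ : IsSmoothRep ρ)
    (ι : ↥(SSx K) →ₗ[ℂ] V) (hι : GRep.Equivariant (SRep ψ hψlc) ρ ι)
    (hιinj : Function.Injective ι)
    (π : V →ₗ[ℂ] ℂ) (hπ : GRep.Equivariant ρ (chiRep K χ) π)
    (hπsurj : Function.Surjective π) (hexact : LinearMap.ker π = LinearMap.range ι) :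
    ((∃ σ : ℂ →ₗ[ℂ] V, GRep.Equivariant (chiRep K χ) ρ σ ∧ π.comp σ = LinearMap.id) ∨
      GRep.Iso ρ (ERep ψ hψlc χ)) ∧
    ¬ ∃ σ : ℂ →ₗ[ℂ] ↥(CcK K), GRep.Equivariant (chiRep K χ) (ERep ψ hψlc χ) σ ∧
        (ev0 (K := K)).comp σ = LinearMap.id :=
  statement11_general ψ hψlc hψne χ ρ hρ ι hι hιinj π hπ hπsurj hexact

end Statements

end PSW
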